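/- Let ρ ∈ (0,1), R, L, c₁ > 0, η > 0 and ϰ, ϰ′ > 0. For a sign σ ∈ {+1,−1}, ε ∈ (0,1), real numbers a ≤ b, and z ∈ ℝ, define the (possibly empty) interval B^ε_σ(z) = ε^{−1} R L^{−1/ρ} · [ ((εa − εz − σε^{1+η}) ∨ 0)^{1/ρ}, ((εb − εz + σε^{1+η}) ∨ 0)^{1/ρ} ]. Then there exist constants δ″, p, C > 0 such that for both σ ∈ {+1,−1} and all sufficiently small ε > 0: sup over x ∈ K_ϰ(ε), intervals [a,b] ⊆ K_{ϰ′}(ε), and z ∈ ℝ of | ε^{−(1/ρ−1)} ∫_{B^ε_σ(z)} g_{c₁}(s − x) ds − R L^{−1/ρ} g_{c₁}(x) h(a,b;z) | ≤ C ε^{δ″} (|z|^p + 1), where h(a,b;z) = ((b−z) ∨ 0)^{1/ρ} − ((a−z) ∨ 0)^{1/ρ}. -/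

import Mathlib

open MeasureTheory

/-- `lE ε = log (1/ε)`. -/
noncomputable def lE (ε : ℝ) : ℝ := Real.log (1 / ε)

/-- `K_ϰ(ε) = [-(l_ε)^ϰ, (l_ε)^ϰ]`. -/
noncomputable def Kset (ϰ ε : ℝ) : Set ℝ := Set.Icc (-(lE ε ^ ϰ)) (lE ε ^ ϰ)

/-- The centered Gaussian density with variance `c`. -/
noncomputable def gaussDensity (c x : ℝ) : ℝ :=
  (Real.sqrt (2 * Real.pi * c))⁻¹ * Real.exp (-(x ^ 2) / (2 * c))

/-- `h(a,b;z) = ((b-z) ∨ 0)^{1/ρ} - ((a-z) ∨ 0)^{1/ρ}`. -/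
noncomputable def hFun (ρ a b z : ℝ) : ℝ :=
  (max (b - z) 0) ^ (1 / ρ) - (max (a - z) 0) ^ (1 / ρ)

/-- The (possibly empty) interval `B^ε_σ(z)`. -/
noncomputable def Bset (ρ R L η σ ε a b z : ℝ) : Set ℝ :=
  Set.Icc (ε⁻¹ * R * L ^ (-(1 / ρ)) * (max (ε * a - ε * z - σ * ε ^ (1 + η)) 0) ^ (1 / ρ))
    (ε⁻¹ * R * L ^ (-(1 / ρ)) * (max (ε * b - ε * z + σ * ε ^ (1 + η)) 0) ^ (1 / ρ))

lemma aux_rpow_diff {q T u v : ℝ} (hq : 1 ≤ q) (hu : 0 ≤ u) (hv : 0 ≤ v) (huT : u ≤ T)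
    (hvT : v ≤ T) : |u ^ q - v ^ q| ≤ q * T ^ (q - 1) * |u - v| := by
  have := Convex.norm_image_sub_le_of_norm_hasDerivWithin_le (f := fun t : ℝ => t ^ q)
    (f' := fun t => q * t ^ (q - 1)) (s := Set.Icc 0 T) (C := q * T ^ (q - 1)) (x := v) (y := u)
    (fun t _ => (Real.hasDerivAt_rpow_const (Or.inr hq)).hasDerivWithinAt)
    (fun t ht => by
      have h0 : 0 ≤ q * t ^ (q - 1) := mul_nonneg (by linarith) (Real.rpow_nonneg ht.1 _)
      rw [Real.norm_eq_abs, abs_of_nonneg h0]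
      exact mul_le_mul_of_nonneg_left (Real.rpow_le_rpow ht.1 ht.2 (by linarith)) (by linarith))
    (convex_Icc 0 T) ⟨hv, hvT⟩ ⟨hu, huT⟩
  simpa [Real.norm_eq_abs] using this

lemma aux_gauss_nonneg (c x : ℝ) : 0 ≤ gaussDensity c x := by
  unfold gaussDensity; positivity

lemma aux_gauss_le {c : ℝ} (hc : 0 < c) (x : ℝ) :
    gaussDensity c x ≤ (Real.sqrt (2 * Real.pi * c))⁻¹ := by
  unfold gaussDensity
  have h : Real.exp (-(x ^ 2) / (2 * c)) ≤ 1 := by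
    apply Real.exp_le_one_iff.2
    apply div_nonpos_of_nonpos_of_nonneg
    · nlinarith [sq_nonneg x]
    · positivity
  have : 0 ≤ (Real.sqrt (2 * Real.pi * c))⁻¹ := by positivity
  nlinarith

lemma aux_gauss_neg (c x : ℝ) : gaussDensity c (-x) = gaussDensity c x := by
  unfold gaussDensity; simp

lemma aux_gauss_cont (c : ℝ) : Continuous (gaussDensity c) := by
  unfold gaussDensity; fun_prop

lemma aux_gauss_lip {c : ℝ} (hc : 0 < c) :
    ∃ K : ℝ, 0 < K ∧ ∀ u v, |gaussDensity c u - gaussDensity c v| ≤ K * |u - v| := by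
  have hs : 0 < (Real.sqrt (2 * Real.pi * c))⁻¹ := by
    have := Real.pi_pos
    positivity
  refine ⟨(Real.sqrt (2 * Real.pi * c))⁻¹ * (1 + 1 / (2 * c)), by positivity, fun u v => ?_⟩
  have := Convex.norm_image_sub_le_of_norm_hasDerivWithin_le (f := gaussDensity c)
    (f' := fun t => (Real.sqrt (2 * Real.pi * c))⁻¹ *
      (Real.exp (-(t ^ 2) / (2 * c)) * (-(2 * t) / (2 * c)))) (s := Set.univ)
    (C := (Real.sqrt (2 * Real.pi * c))⁻¹ * (1 + 1 / (2 * c))) (x := v) (y := u)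
    (fun t _ => by
      apply HasDerivAt.hasDerivWithinAt
      unfold gaussDensity
      apply HasDerivAt.const_mul
      apply HasDerivAt.exp
      apply HasDerivAt.div_const
      have h2 : HasDerivAt (fun y : ℝ => y ^ 2) (2 * t) t := by
        simpa using hasDerivAt_pow 2 t
      exact h2.neg)
    (fun t _ => by
      rw [norm_mul, Real.norm_of_nonneg hs.le]
      apply mul_le_mul_of_nonneg_left _ hs.le
      rw [norm_mul, Real.norm_of_nonneg (Real.exp_pos _).le, neg_div, Real.exp_neg]
      rw [Real.norm_eq_abs, abs_div, abs_neg, abs_mul, abs_of_pos (by positivity : 0 < 2 * c),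
        abs_of_pos (by norm_num : (0:ℝ) < 2)]
      have h1 := Real.add_one_le_exp (t ^ 2 / (2 * c))
      rw [inv_mul_le_iff₀ (Real.exp_pos _)]
      refine le_trans ?_ (mul_le_mul_of_nonneg_right h1 (by positivity))
      rw [← sub_nonneg]
      have : (t ^ 2 / (2 * c) + 1) * (1 + 1 / (2 * c)) - 2 * |t| / (2 * c)
         = ((|t| ^ 2 + 1 - 2 * |t|) * (2 * c) + |t| ^ 2 + (2 * c) ^ 2) / (2 * c) ^ 2 := by
        rw [sq_abs]; field_simp; ring
      rw [this]
      apply div_nonneg _ (by positivity)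
      have : 0 ≤ (|t| - 1) ^ 2 * (2 * c) := by positivity
      nlinarith [sq_nonneg (|t|), sq_nonneg (2 * c)])
    convex_univ (Set.mem_univ _) (Set.mem_univ _)
  simpa [Real.norm_eq_abs] using this

lemma aux_int {c K : ℝ} (hK : ∀ u v, |gaussDensity c u - gaussDensity c v| ≤ K * |u - v|)
    (hK0 : 0 < K) {lo hi x : ℝ} (h0 : 0 ≤ lo) (h : lo ≤ hi) :
    |(∫ s in Set.Icc lo hi, gaussDensity c (s - x)) - gaussDensity c x * (hi - lo)|
      ≤ K * hi ^ 2 := by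
  rw [integral_Icc_eq_integral_Ioc, ← intervalIntegral.integral_of_le h]
  have hc : gaussDensity c x * (hi - lo) = ∫ s in lo..hi, gaussDensity c x := by
    simp [mul_comm]
  have hi1 : IntervalIntegrable (fun s => gaussDensity c (s - x)) volume lo hi :=
    ((aux_gauss_cont c).comp (continuous_sub_right x)).intervalIntegrable _ _
  rw [hc, ← intervalIntegral.integral_sub hi1 (by simp)]
  have := intervalIntegral.norm_integral_le_of_norm_le_const (a := lo) (b := hi) (C := K * hi)
    (f := fun s => gaussDensity c (s - x) - gaussDensity c x) (fun s hs => by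
      rw [Set.uIoc_of_le h] at hs
      rw [← aux_gauss_neg c x, Real.norm_eq_abs]
      refine (hK _ _).trans ?_
      apply mul_le_mul_of_nonneg_left _ hK0.le
      rw [abs_le]; constructor <;> linarith [hs.1, hs.2])
  rw [Real.norm_eq_abs, abs_of_nonneg (by linarith : 0 ≤ hi - lo)] at this
  refine this.trans ?_
  have h1 : 0 ≤ K * hi := mul_nonneg hK0.le (by linarith)
  nlinarith

lemma aux_scale {q ε t : ℝ} (hε : 0 < ε) : ε⁻¹ * (max (ε * t) 0) ^ q
    = ε ^ (q - 1) * (max t 0) ^ q := by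
  have : max (ε * t) 0 = ε * max t 0 := by
    rw [mul_max_of_nonneg _ _ hε.le, mul_zero]
  rw [this, Real.mul_rpow hε.le (le_max_right _ _), Real.rpow_sub_one hε.ne']
  field_simp

/-- Core bound with perturbed endpoints. -/
lemma aux_core {c K : ℝ} (hc : 0 < c)
    (hK : ∀ u v, |gaussDensity c u - gaussDensity c v| ≤ K * |u - v|)
    (hK0 : 0 < K) {M e A B A0 B0 x D W : ℝ} (hM : 0 < M) (he : 0 < e) (hA : 0 ≤ A) (hB : 0 ≤ B)
    (h0 : A0 ≤ B0) (hAD : |A - A0| ≤ D) (hBD : |B - B0| ≤ D) (hW : B ^ 2 ≤ W) :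
    |e⁻¹ * (∫ s in Set.Icc (M * (e * A)) (M * (e * B)), gaussDensity c (s - x)) -
      M * gaussDensity c x * (B0 - A0)| ≤
      K * M ^ 2 * e * W + 4 * M * (Real.sqrt (2 * Real.pi * c))⁻¹ * D := by
  set G := (Real.sqrt (2 * Real.pi * c))⁻¹
  have hg0 := aux_gauss_nonneg c x
  have hg1 : gaussDensity c x ≤ G := aux_gauss_le hc x
  have hD : 0 ≤ D := (abs_nonneg _).trans hAD
  have hW0 : 0 ≤ W := (sq_nonneg _).trans hW
  have key : |M * gaussDensity c x * ((B - A) - (B0 - A0))| ≤ M * G * (2 * D) := by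
    rw [abs_mul, abs_of_nonneg (mul_nonneg hM.le hg0)]
    have : |(B - A) - (B0 - A0)| ≤ 2 * D := by
      rw [abs_le] at *; constructor <;> linarith [hAD.1, hAD.2, hBD.1, hBD.2]
    gcongr
  have hMGD : 0 ≤ M * G * D := mul_nonneg (mul_nonneg hM.le (hg0.trans hg1)) hD
  rcases le_or_gt A B with hAB | hAB
  · have h1 := aux_int (x := x) hK hK0 (lo := M * (e * A)) (hi := M * (e * B)) (by positivity)
      (by gcongr)
    set I := ∫ s in Set.Icc (M * (e * A)) (M * (e * B)), gaussDensity c (s - x)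
    have h2 : e⁻¹ * I - M * gaussDensity c x * (B0 - A0) =
        e⁻¹ * (I - gaussDensity c x * (M * (e * B) - M * (e * A)))
        + M * gaussDensity c x * ((B - A) - (B0 - A0)) := by
      field_simp; ring
    rw [h2]
    refine (abs_add_le _ _).trans ?_
    have h3 : |e⁻¹ * (I - gaussDensity c x * (M * (e * B) - M * (e * A)))|
        ≤ K * M ^ 2 * e * W := by
      rw [abs_mul, abs_of_pos (inv_pos.2 he), inv_mul_le_iff₀ he]
      refine h1.trans ?_
      calc K * (M * (e * B)) ^ 2 = (e * (K * M ^ 2 * e)) * B ^ 2 := by ring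
        _ ≤ (e * (K * M ^ 2 * e)) * W := by gcongr
        _ = _ := by ring
    linarith
  · rw [Set.Icc_eq_empty (by
      rw [not_le]; gcongr)]
    simp only [Measure.restrict_empty, integral_zero_measure, mul_zero, zero_sub, abs_neg]
    have h4 : |B0 - A0| ≤ 2 * D := by
      rw [abs_le] at *; constructor <;> linarith [hAD.1, hAD.2, hBD.1, hBD.2]
    have : |M * gaussDensity c x * (B0 - A0)| ≤ M * G * (2 * D) := by
      rw [abs_mul, abs_of_nonneg (mul_nonneg hM.le hg0)]
      gcongr
    have : 0 ≤ K * M ^ 2 * e * W := by positivity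
    linarith

lemma aux_max {q T t s d l z : ℝ} (hq : 1 ≤ q) (hT : T = l + |z| + 1) (hl : 0 ≤ l)
    (hd0 : 0 ≤ d) (hd1 : d ≤ 1)
    (ht : |t| ≤ l) (hs : |s| ≤ d) :
    |(max (t - z + s) 0) ^ q - (max (t - z) 0) ^ q| ≤ q * T ^ q * d ∧
      ((max (t - z + s) 0) ^ q) ^ 2 ≤ T ^ (2 * q) := by
  have hz := abs_nonneg z
  have hT1 : 1 ≤ T := by linarith
  have hz' := neg_abs_le z
  have ht' := le_abs_self t
  have hs' := le_abs_self s
  have h1 : max (t - z + s) 0 ≤ T := max_le (by linarith) (by linarith)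
  have h2 : max (t - z) 0 ≤ T := max_le (by linarith) (by linarith)
  constructor
  · refine (aux_rpow_diff hq (le_max_right _ _) (le_max_right _ _) h1 h2).trans ?_
    have h3 : |max (t - z + s) 0 - max (t - z) 0| ≤ d := by
      refine (abs_max_sub_max_le_abs _ _ _).trans ?_
      simpa using hs
    have h4 : T ^ (q - 1) ≤ T ^ q := Real.rpow_le_rpow_of_exponent_le hT1 (by linarith)
    gcongr
  · rw [mul_comm, Real.rpow_mul (by linarith)]
    rw [Real.rpow_two]
    have h0 : 0 ≤ max (t - z + s) 0 := le_max_right _ _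
    gcongr

lemma aux_T {q l z : ℝ} (hq : 1 ≤ q) (hl : 0 ≤ l) :
    (l + |z| + 1) ^ (2 * q) ≤ (l + 1) ^ (2 * q) * (2 ^ (2 * q) * (|z| ^ (2 * q) + 1)) := by
  have hz := abs_nonneg z
  have h1 : l + |z| + 1 ≤ (l + 1) * (|z| + 1) := by nlinarith
  refine (Real.rpow_le_rpow (by positivity) h1 (by positivity)).trans ?_
  rw [Real.mul_rpow (by positivity) (by positivity)]
  gcongr
  have h2 : |z| + 1 ≤ 2 * max |z| 1 := by
    linarith [le_max_left |z| 1, le_max_right |z| 1]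
  refine (Real.rpow_le_rpow (by positivity) h2 (by positivity)).trans ?_
  rw [Real.mul_rpow (by positivity) (by positivity)]
  gcongr
  rcases max_cases |z| 1 with h | h <;> rw [h.1]
  · linarith
  · rw [Real.one_rpow]; linarith [Real.rpow_nonneg hz (2 * q)]

lemma aux_log {k m : ℝ} (hk : 0 < k) (hm : 0 < m) :
    ∃ C : ℝ, 0 < C ∧ ∀ ε : ℝ, 0 < ε → ε < 1 → 0 ≤ lE ε ^ k ∧ lE ε ^ k + 1 ≤ C * ε ^ (-m) := by
  have hr : 0 < m / k := by positivity
  refine ⟨((m / k)⁻¹) ^ k + 1, by positivity, fun ε h0 h1 => ?_⟩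
  have hl : 0 ≤ lE ε := Real.log_nonneg (by rw [le_div_iff₀ h0]; linarith)
  refine ⟨Real.rpow_nonneg hl _, ?_⟩
  have h2 : lE ε ≤ ε ^ (-(m / k)) * (m / k)⁻¹ := by
    have := Real.log_le_rpow_div (x := 1 / ε) (by positivity) hr
    rw [one_div, Real.inv_rpow h0.le, ← Real.rpow_neg h0.le] at this
    unfold lE
    rw [one_div]
    simpa [div_eq_mul_inv] using this
  have h3 := Real.rpow_le_rpow hl h2 hk.le
  rw [Real.mul_rpow (by positivity) (by positivity), ← Real.rpow_mul h0.le] at h3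
  have h4 : -(m / k) * k = -m := by field_simp
  rw [h4] at h3
  have h5 : 1 ≤ ε ^ (-m) := Real.one_le_rpow_of_pos_of_le_one_of_nonpos h0 h1.le (by linarith)
  linarith

theorem stmt15 (ρ R L c₁ η ϰ ϰ' : ℝ)
    (hρ0 : 0 < ρ) (hρ1 : ρ < 1) (hR : 0 < R) (hL : 0 < L) (hc₁ : 0 < c₁)
    (hη : 0 < η) (hϰ : 0 < ϰ) (hϰ' : 0 < ϰ') :
    ∃ δ p C : ℝ, 0 < δ ∧ 0 < p ∧ 0 < C ∧ ∃ ε₀ : ℝ, 0 < ε₀ ∧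
      ∀ σ : ℝ, σ = 1 ∨ σ = -1 →
      ∀ ε : ℝ, 0 < ε → ε < ε₀ →
      ∀ x ∈ Kset ϰ ε, ∀ a b : ℝ, a ≤ b → Set.Icc a b ⊆ Kset ϰ' ε → ∀ z : ℝ,
        |ε ^ (-(1 / ρ - 1)) * (∫ s in Bset ρ R L η σ ε a b z, gaussDensity c₁ (s - x)) -
            R * L ^ (-(1 / ρ)) * gaussDensity c₁ x * hFun ρ a b z| ≤
          C * ε ^ δ * (|z| ^ p + 1) := by
  set q := 1 / ρ with hqdef
  have hq : 1 < q := by rw [hqdef, lt_div_iff₀ hρ0]; linarith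
  obtain ⟨K, hK0, hK⟩ := aux_gauss_lip hc₁
  set δ := min (q - 1) η with hδ
  have hδ0 : 0 < δ := lt_min (by linarith) hη
  obtain ⟨C1, hC1, hlog⟩ := aux_log (k := ϰ') (m := δ / (4 * q)) hϰ' (by positivity)
  have hM : 0 < R * L ^ (-q) := by positivity
  set M := R * L ^ (-q) with hMdef
  set G := (Real.sqrt (2 * Real.pi * c₁))⁻¹ with hG
  have hG0 : 0 < G := by
    have := Real.pi_pos
    positivity
  refine ⟨δ / 2, 2 * q, (K * M ^ 2 + 4 * M * G * q) * (C1 ^ (2 * q) * 2 ^ (2 * q)),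
    by positivity, by positivity, by positivity, 1, one_pos, ?_⟩
  intro σ hσ ε hε hε1 x _ a b hab hsub z
  obtain ⟨hl0, hl1⟩ := hlog ε hε hε1
  have ha : |a| ≤ lE ε ^ ϰ' := abs_le.2 (hsub (Set.left_mem_Icc.2 hab))
  have hb : |b| ≤ lE ε ^ ϰ' := abs_le.2 (hsub (Set.right_mem_Icc.2 hab))
  set l := lE ε ^ ϰ'
  have hd0 : 0 ≤ ε ^ η := by positivity
  have hd1 : ε ^ η ≤ 1 := Real.rpow_le_one hε.le hε1.le hη.le
  have hσ1 : |σ| = 1 := by rcases hσ with h | h <;> simp [h]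
  have hs1 : |-(σ * ε ^ η)| ≤ ε ^ η := by rw [abs_neg, abs_mul, hσ1, abs_of_nonneg hd0, one_mul]
  have hs2 : |σ * ε ^ η| ≤ ε ^ η := by rw [abs_mul, hσ1, abs_of_nonneg hd0, one_mul]
  obtain ⟨hA1, -⟩ := aux_max (z := z) hq.le rfl hl0 hd0 hd1 ha hs1
  obtain ⟨hB1, hB2⟩ := aux_max (z := z) hq.le rfl hl0 hd0 hd1 hb hs2
  have hTT := aux_T (z := z) hq.le hl0
  have hz := abs_nonneg z
  have hT1 : 1 ≤ l + |z| + 1 := by linarith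
  set T := l + |z| + 1
  have hAB : (max (a - z) 0) ^ q ≤ (max (b - z) 0) ^ q := by
    have : 0 ≤ max (a - z) 0 := le_max_right _ _
    gcongr
  have core := aux_core (x := x) hc₁ hK hK0 hM (e := ε ^ (q - 1)) (by positivity)
    (A := (max (a - z + -(σ * ε ^ η)) 0) ^ q) (B := (max (b - z + σ * ε ^ η) 0) ^ q)
    (by positivity) (by positivity) hAB hA1 hB1 hB2
  have hset : Bset ρ R L η σ ε a b z =
      Set.Icc (M * (ε ^ (q - 1) * (max (a - z + -(σ * ε ^ η)) 0) ^ q))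
        (M * (ε ^ (q - 1) * (max (b - z + σ * ε ^ η) 0) ^ q)) := by
    unfold Bset
    rw [← aux_scale hε, ← aux_scale hε, ← hqdef, hMdef, Real.rpow_add hε, Real.rpow_one]
    congr 1
    · rw [show ε * a - ε * z - σ * (ε * ε ^ η) = ε * (a - z + -(σ * ε ^ η)) by ring]; ring
    · rw [show ε * b - ε * z + σ * (ε * ε ^ η) = ε * (b - z + σ * ε ^ η) by ring]; ring
  rw [hset, Real.rpow_neg hε.le]
  unfold hFun
  rw [← hqdef]
  refine core.trans ?_
  have e1 : ε ^ (q - 1) ≤ ε ^ δ :=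
    Real.rpow_le_rpow_of_exponent_ge hε hε1.le (min_le_left _ _)
  have e2 : ε ^ η ≤ ε ^ δ :=
    Real.rpow_le_rpow_of_exponent_ge hε hε1.le (min_le_right _ _)
  have e3 : T ^ q ≤ T ^ (2 * q) := Real.rpow_le_rpow_of_exponent_le hT1 (by linarith)
  have e4 : (l + 1) ^ (2 * q) ≤ C1 ^ (2 * q) * ε ^ (-(δ / 2)) := by
    refine (Real.rpow_le_rpow (by linarith) hl1 (by positivity)).trans ?_
    rw [Real.mul_rpow (by positivity) (by positivity), ← Real.rpow_mul hε.le]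
    rw [show -(δ / (4 * q)) * (2 * q) = -(δ / 2) by field_simp; norm_num]
  have e5 : ε ^ δ * ε ^ (-(δ / 2)) = ε ^ (δ / 2) := by
    rw [← Real.rpow_add hε]; congr 1; ring
  calc K * M ^ 2 * ε ^ (q - 1) * T ^ (2 * q) + 4 * M * G * (q * T ^ q * ε ^ η)
      ≤ K * M ^ 2 * ε ^ δ * T ^ (2 * q) + 4 * M * G * (q * T ^ (2 * q) * ε ^ δ) := by gcongr
    _ = (K * M ^ 2 + 4 * M * G * q) * ε ^ δ * T ^ (2 * q) := by ring
    _ ≤ (K * M ^ 2 + 4 * M * G * q) * ε ^ δ *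
        ((C1 ^ (2 * q) * ε ^ (-(δ / 2))) * (2 ^ (2 * q) * (|z| ^ (2 * q) + 1))) := by
      refine mul_le_mul_of_nonneg_left (hTT.trans ?_) (by positivity)
      gcongr
    _ = (K * M ^ 2 + 4 * M * G * q) * (C1 ^ (2 * q) * 2 ^ (2 * q)) *
        (ε ^ δ * ε ^ (-(δ / 2))) * (|z| ^ (2 * q) + 1) := by ring
    _ = _ := by rw [e5]
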